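/- Assume α > 0 and let ℓ = ℓ_exp, with R(w) := (1/n) ∑_{i=1}^n exp(−⟨w, z_i⟩). For any w ∈ ℝ^d with ⟨w, ū⟩ ≥ 0 and ‖Π_⊥ w‖ ≥ (1 + ln n)/α, it holds that ⟨Π_⊥ w, ∇R(w)⟩ ≥ 0. -/

import Mathlib

/-!
Write `a = ⟨w, ū⟩ ≥ 0`, `p = Π_⊥ w` and `qᵢ = ⟨p, zᵢ⟩`, so that `⟨w, zᵢ⟩ = a ⟨ū, zᵢ⟩ + qᵢ`, and put
`c = exp (-a γ)`. The claim is `∑ᵢ exp (-⟨w, zᵢ⟩) qᵢ ≤ 0`.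

* Every summand is at most `c`: it is nonpositive if `qᵢ ≤ 0`, and otherwise
  `exp (-⟨w, zᵢ⟩) ≤ c exp (-qᵢ)` by the margin condition, while `q exp (-q) ≤ 1`.
* Some summand is at most `-c n`: the definition of `α` applied to the direction `-p / ‖p‖` gives
  a support vector `zᵢ` with `-qᵢ ≥ α ‖p‖ ≥ 1 + ln n` (`exists_support_alphaConst_mul_le`). For it
  `exp (-⟨w, zᵢ⟩) = c exp (-qᵢ) ≥ c n` and `qᵢ ≤ -1`.

Hence the sum is at most `-c n + (n - 1) c ≤ 0`.
-/

open Matrix Filter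
open scoped BigOperators

noncomputable section

/-- Euclidean norm of a vector in `ℝ^m`. -/
def vecNorm {m : Type*} [Fintype m] (v : m → ℝ) : ℝ :=
  Real.sqrt (∑ i, (v i) ^ 2)

/-- Frobenius norm of a real matrix. -/
def frobNorm {m n : Type*} [Fintype m] [Fintype n] (M : Matrix m n ℝ) : ℝ :=
  Real.sqrt (∑ i, ∑ j, (M i j) ^ 2)

/-- Spectral norm (operator 2-norm) of a real matrix. -/
def specNorm {m n : Type*} [Fintype m] [Fintype n] (M : Matrix m n ℝ) : ℝ :=
  sSup {c : ℝ | ∃ v : n → ℝ, vecNorm v = 1 ∧ c = vecNorm (M.mulVec v)}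

/-- `(u, v)` is a top singular vector pair of `M`: both are unit vectors,
`M v = ‖M‖₂ u` and `Mᵀ u = ‖M‖₂ v`. -/
def IsTopSingularPair {m n : Type*} [Fintype m] [Fintype n]
    (M : Matrix m n ℝ) (u : m → ℝ) (v : n → ℝ) : Prop :=
  vecNorm u = 1 ∧ vecNorm v = 1 ∧
    M.mulVec v = specNorm M • u ∧ Mᵀ.mulVec u = specNorm M • v

/-- Parameters of a deep linear network: layer `k` (0-indexed; paper layer `k+1`)
is a matrix mapping `ℝ^{dim k}` to `ℝ^{dim (k+1)}`. -/
abbrev Layers (dim : ℕ → ℕ) := ∀ j : ℕ, Matrix (Fin (dim (j+1))) (Fin (dim j)) ℝ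

/-- Product `W_{j-1} ⋯ W_0` of the bottom `j` layers (paper: `W_j ⋯ W_1`). -/
def prodUpTo {dim : ℕ → ℕ} (W : Layers dim) : ∀ j : ℕ, Matrix (Fin (dim j)) (Fin (dim 0)) ℝ
  | 0 => 1
  | (j+1) => W j * prodUpTo W j

/-- Product `W_{L-1} ⋯ W_j` of the layers from `j` up to the top layer `L-1`
(paper: `W_L ⋯ W_{j+1}`); for `j ≥ L` it is a pseudo-identity. -/
def prodFrom {dim : ℕ → ℕ} (L : ℕ) (W : Layers dim) (j : ℕ) :
    Matrix (Fin (dim L)) (Fin (dim j)) ℝ :=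
  if h : j < L then prodFrom L W (j+1) * W j
  else Matrix.of fun i j' => if (i : ℕ) = (j' : ℕ) then 1 else 0
  termination_by L - j
  decreasing_by omega

/-- The linear predictor `w_prod = (W_L ⋯ W_1)ᵀ ∈ ℝ^d` induced by the network
(recall `dim L = 1`). -/
def wprod {dim : ℕ → ℕ} (L : ℕ) (W : Layers dim) : Fin (dim 0) → ℝ :=
  fun j => ∑ a, prodUpTo W L a j

/-- Empirical risk of a linear predictor `w`: `R(w) = (1/n) ∑ᵢ ℓ(⟨w, zᵢ⟩)`. -/
def riskV {n d : ℕ} (ℓ : ℝ → ℝ) (z : Fin n → Fin d → ℝ) (w : Fin d → ℝ) : ℝ :=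
  (n : ℝ)⁻¹ * ∑ i, ℓ (w ⬝ᵥ z i)

/-- Gradient of the risk w.r.t. the linear predictor: `∇R(w) = (1/n) ∑ᵢ ℓ'(⟨w, zᵢ⟩) zᵢ`. -/
def gradRiskV {n d : ℕ} (ℓ' : ℝ → ℝ) (z : Fin n → Fin d → ℝ) (w : Fin d → ℝ) :
    Fin d → ℝ :=
  (n : ℝ)⁻¹ • ∑ i, ℓ' (w ⬝ᵥ z i) • z i

/-- The partial gradient of the empirical risk with respect to layer `k`:
`∂R/∂W_k = (W_L ⋯ W_{k+1})ᵀ ∇R(w_prod)ᵀ (W_{k-1} ⋯ W_1)ᵀ`. -/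
def gradLayer {dim : ℕ → ℕ} (L : ℕ) (ℓ' : ℝ → ℝ) {n : ℕ}
    (z : Fin n → Fin (dim 0) → ℝ) (W : Layers dim) (k : ℕ) :
    Matrix (Fin (dim (k+1))) (Fin (dim k)) ℝ :=
  (prodFrom L W (k+1))ᵀ *
    (Matrix.of fun (_ : Fin (dim L)) (j : Fin (dim 0)) => gradRiskV ℓ' z (wprod L W) j) *
    (prodUpTo W k)ᵀ

/-- Empirical risk of the network. -/
def riskW {dim : ℕ → ℕ} (L : ℕ) (ℓ : ℝ → ℝ) {n : ℕ}
    (z : Fin n → Fin (dim 0) → ℝ) (W : Layers dim) : ℝ :=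
  riskV ℓ z (wprod L W)

/-- Gradient flow: `dW(t)/dt = −∇R(W(t))` for all `t ≥ 0`, entrywise on each layer. -/
def IsGradientFlow {dim : ℕ → ℕ} (L : ℕ) (ℓ' : ℝ → ℝ) {n : ℕ}
    (z : Fin n → Fin (dim 0) → ℝ) (W : ℝ → Layers dim) : Prop :=
  ∀ t : ℝ, 0 ≤ t → ∀ k < L, ∀ i j,
    HasDerivAt (fun s => W s k i j) (-(gradLayer L ℓ' z (W t) k i j)) t

/-- The initialization-dependent constant `D`. -/
def Dconst {dim : ℕ → ℕ} (L : ℕ) (W0 : Layers dim) : ℝ :=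
  (⨆ k : Fin L, frobNorm (W0 k) ^ 2) - frobNorm (W0 (L-1)) ^ 2
    + ∑ k ∈ Finset.range (L-1),
        specNorm (W0 k * (W0 k)ᵀ - (W0 (k+1))ᵀ * W0 (k+1))

/-- Euclidean norm of a parameter tuple (all entries of the first `L` layers concatenated). -/
def paramNorm {dim : ℕ → ℕ} (L : ℕ) (V : Layers dim) : ℝ :=
  Real.sqrt (∑ k ∈ Finset.range L, frobNorm (V k) ^ 2)

/-- Squared Euclidean norm of the full gradient `∇R(W)`. -/
def gradNormSq {dim : ℕ → ℕ} (L : ℕ) (ℓ' : ℝ → ℝ) {n : ℕ}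
    (z : Fin n → Fin (dim 0) → ℝ) (W : Layers dim) : ℝ :=
  ∑ k ∈ Finset.range L, frobNorm (gradLayer L ℓ' z W k) ^ 2

/-- The data-dependent constant `α = min_{‖ξ‖=1, ξ ⟂ ū} max_{i ∈ S} ⟨ξ, zᵢ⟩`,
where `S` is the set of support vectors. -/
def alphaConst {n d : ℕ} (z : Fin n → Fin d → ℝ) (ubar : Fin d → ℝ) (γ : ℝ) : ℝ :=
  sInf {c : ℝ | ∃ ξ : Fin d → ℝ, vecNorm ξ = 1 ∧ ξ ⬝ᵥ ubar = 0 ∧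
    c = sSup {r : ℝ | ∃ i : Fin n, ubar ⬝ᵥ z i = γ ∧ r = ξ ⬝ᵥ z i}}

/-- Orthogonal projection onto the orthogonal complement of `span(ū)` (for `ū` a unit vector). -/
def projPerp {d : ℕ} (ubar : Fin d → ℝ) (w : Fin d → ℝ) : Fin d → ℝ :=
  w - (w ⬝ᵥ ubar) • ubar

lemma vecNorm_smul {m : Type*} [Fintype m] (c : ℝ) (v : m → ℝ) :
    vecNorm (c • v) = |c| * vecNorm v := by
  simp only [vecNorm, Pi.smul_apply, smul_eq_mul, mul_pow, ← Finset.mul_sum]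
  rw [Real.sqrt_mul (sq_nonneg c), Real.sqrt_sq_eq_abs]

lemma dotProduct_self_of_vecNorm_eq_one {m : Type*} [Fintype m] {v : m → ℝ}
    (hv : vecNorm v = 1) : v ⬝ᵥ v = 1 := by
  have h : ∑ i, (v i) ^ 2 = 1 := Real.sqrt_eq_one.mp hv
  simpa [dotProduct, sq] using h

lemma projPerp_dotProduct_self {d : ℕ} {ubar : Fin d → ℝ} (hu : vecNorm ubar = 1)
    (w : Fin d → ℝ) : projPerp ubar w ⬝ᵥ ubar = 0 := by
  simp [projPerp, sub_dotProduct, dotProduct_self_of_vecNorm_eq_one hu]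

/-- If `α > 0`, every nonzero `v ⟂ ū` has `⟨v, zᵢ⟩ ≥ α ‖v‖` for some support vector `zᵢ`. The
junk values of `sInf` and `sSup` cause no trouble: an unbounded infimum, or a supremum over an
empty set of support vectors, would be `0`, which is incompatible with `α > 0`. -/
lemma exists_support_alphaConst_mul_le {n d : ℕ} {z : Fin n → Fin d → ℝ} {ubar : Fin d → ℝ}
    {γ : ℝ} (halpha : 0 < alphaConst z ubar γ) {v : Fin d → ℝ} (hv : 0 < vecNorm v)
    (hperp : v ⬝ᵥ ubar = 0) :
    ∃ i, ubar ⬝ᵥ z i = γ ∧ alphaConst z ubar γ * vecNorm v ≤ v ⬝ᵥ z i := by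
  set ξ : Fin d → ℝ := (vecNorm v)⁻¹ • v with hξ
  set T : Set ℝ := {r : ℝ | ∃ i : Fin n, ubar ⬝ᵥ z i = γ ∧ r = ξ ⬝ᵥ z i} with hT
  have hle : alphaConst z ubar γ ≤ sSup T := by
    refine csInf_le ?_ ⟨ξ, ?_, ?_, rfl⟩
    · by_contra hb
      exact halpha.ne' (Real.sInf_of_not_bddBelow hb)
    · rw [hξ, vecNorm_smul, abs_of_pos (inv_pos.mpr hv), inv_mul_cancel₀ hv.ne']
    · rw [hξ, smul_dotProduct, hperp, smul_zero]
  have hne : T.Nonempty := by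
    by_contra h
    rw [Set.not_nonempty_iff_eq_empty.mp h, Real.sSup_empty] at hle
    linarith
  have hfin : T.Finite :=
    (Set.finite_range fun i => ξ ⬝ᵥ z i).subset fun r ⟨i, _, hr⟩ => ⟨i, hr.symm⟩
  obtain ⟨i, hi, hr⟩ := hne.csSup_mem hfin
  refine ⟨i, hi, ?_⟩
  rw [hr, hξ, smul_dotProduct, smul_eq_mul, inv_mul_eq_div, le_div_iff₀ hv] at hle
  exact hle

theorem stmt8
    (d n : ℕ) (hn : 0 < n)
    (x : Fin n → Fin d → ℝ) (y : Fin n → ℝ) (z : Fin n → Fin d → ℝ)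
    (hx : ∀ i, vecNorm (x i) ≤ 1) (hy : ∀ i, y i = 1 ∨ y i = -1)
    (hz : ∀ i, z i = y i • x i)
    (usep : Fin d → ℝ) (husep_unit : vecNorm usep = 1)
    (husep : ∀ i, 0 < usep ⬝ᵥ z i)
    (γ : ℝ) (hγ : 0 < γ) (ubar : Fin d → ℝ) (hubar_unit : vecNorm ubar = 1)
    (hubar_margin : ∀ i, γ ≤ ubar ⬝ᵥ z i)
    (hubar_max : ∀ u' : Fin d → ℝ, vecNorm u' = 1 → ∃ i, u' ⬝ᵥ z i ≤ γ)
    (halpha : 0 < alphaConst z ubar γ) :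
    ∀ w : Fin d → ℝ, 0 ≤ w ⬝ᵥ ubar →
      (1 + Real.log n) / alphaConst z ubar γ ≤ vecNorm (projPerp ubar w) →
      0 ≤ projPerp ubar w ⬝ᵥ gradRiskV (fun s : ℝ => -Real.exp (-s)) z w := by
  intro w hw hnorm
  have hn1 : (1 : ℝ) ≤ n := by exact_mod_cast hn
  have hlog : 0 ≤ Real.log n := Real.log_nonneg hn1
  set p := projPerp ubar w with hp
  have hpos : 0 < vecNorm p := lt_of_lt_of_le (div_pos (by linarith) halpha) hnorm
  have hdecomp : ∀ i, w ⬝ᵥ z i = (w ⬝ᵥ ubar) * (ubar ⬝ᵥ z i) + p ⬝ᵥ z i := by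
    intro i
    simp [hp, projPerp, sub_dotProduct]
  have hneg : vecNorm (-p) = vecNorm p := by simp [vecNorm]
  obtain ⟨i₀, hi₀, hq⟩ := exists_support_alphaConst_mul_le halpha (v := -p) (by rwa [hneg])
    (by rw [neg_dotProduct, hp, projPerp_dotProduct_self hubar_unit, neg_zero])
  rw [hneg, neg_dotProduct] at hq
  rw [div_le_iff₀ halpha] at hnorm
  have hq₀ : 1 + Real.log n ≤ -(p ⬝ᵥ z i₀) := by linarith
  set c := Real.exp (-((w ⬝ᵥ ubar) * γ)) with hc
  have hcpos : 0 < c := Real.exp_pos _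
  have hterm : ∀ i, Real.exp (-(w ⬝ᵥ z i)) * (p ⬝ᵥ z i) ≤ c := by
    intro i
    rcases le_or_gt (p ⬝ᵥ z i) 0 with h | h
    · exact (mul_nonpos_of_nonneg_of_nonpos (Real.exp_pos _).le h).trans hcpos.le
    · have h1 : Real.exp (-(w ⬝ᵥ z i)) ≤ c * Real.exp (-(p ⬝ᵥ z i)) := by
        rw [hc, ← Real.exp_add, hdecomp i]
        have := mul_le_mul_of_nonneg_left (hubar_margin i) hw
        exact Real.exp_le_exp.mpr (by linarith)
      have h2 : Real.exp (-(p ⬝ᵥ z i)) * (p ⬝ᵥ z i) ≤ 1 := by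
        rw [Real.exp_neg, inv_mul_le_iff₀ (Real.exp_pos _)]
        linarith [Real.add_one_le_exp (p ⬝ᵥ z i)]
      calc _ ≤ c * Real.exp (-(p ⬝ᵥ z i)) * (p ⬝ᵥ z i) := by gcongr
        _ = c * (Real.exp (-(p ⬝ᵥ z i)) * (p ⬝ᵥ z i)) := by ring
        _ ≤ c := mul_le_of_le_one_right hcpos.le h2
  have hterm₀ : Real.exp (-(w ⬝ᵥ z i₀)) * (p ⬝ᵥ z i₀) ≤ -(c * n) := by
    have h1 : Real.exp (-(w ⬝ᵥ z i₀)) = c * Real.exp (-(p ⬝ᵥ z i₀)) := by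
      rw [hc, ← Real.exp_add, hdecomp i₀, hi₀]
      ring_nf
    have h2 : (n : ℝ) ≤ Real.exp (-(p ⬝ᵥ z i₀)) := by
      rw [← Real.log_le_iff_le_exp (by linarith)]
      linarith
    have h3 : c * n ≤ Real.exp (-(w ⬝ᵥ z i₀)) := by
      rw [h1]
      gcongr
    nlinarith [Real.exp_pos (-(w ⬝ᵥ z i₀))]
  have hsum : ∑ i, Real.exp (-(w ⬝ᵥ z i)) * (p ⬝ᵥ z i) ≤ 0 := by
    rw [← Finset.add_sum_erase _ _ (Finset.mem_univ i₀)]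
    have h := Finset.sum_le_card_nsmul (Finset.univ.erase i₀) _ c fun i _ => hterm i
    rw [Finset.card_erase_of_mem (Finset.mem_univ i₀), Finset.card_univ, Fintype.card_fin,
      nsmul_eq_mul, Nat.cast_sub hn, Nat.cast_one] at h
    linarith
  have hgoal : p ⬝ᵥ gradRiskV (fun s : ℝ => -Real.exp (-s)) z w
      = (n : ℝ)⁻¹ * -∑ i, Real.exp (-(w ⬝ᵥ z i)) * (p ⬝ᵥ z i) := by
    simp [gradRiskV, dotProduct_smul, dotProduct_sum]
  rw [hgoal]
  exact mul_nonneg (by positivity) (by linarith)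

end
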